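/- arXiv:2112.13728 — 2 statements merged into one kernel-verified Lean document; each statement's English description precedes it below -/
import Mathlib

section
/- Let μ₁, ν₁, μ₂, ν₂ > 0, set a_k = μ_k + ν_k and r_k = √(μ_k ν_k), and let θ > 0 satisfy θ·r₁·r₂ < 1. Then (1/(2πi))² · ∮∮_{counterclockwise circles of radii r₁, r₂} (a₁ + 2Re ζ₁)·(a₂ + 2Re ζ₂) / (θ^{-1} − ζ₁ζ₂)² dζ₁ dζ₂ = θ² · μ₁ν₁μ₂ν₂. -/
open Complex Real

lemma aux_circle (a r : ℝ) (hr : 0 < r) (G : ℂ → ℂ)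
    (hG : DifferentiableOn ℂ G (Metric.closedBall 0 r)) :
    (∮ z in C(0, r), ((a : ℂ) + 2 * (z.re : ℂ)) * G z) = 2 * π * I * ((r : ℂ) ^ 2 * G 0) := by
  have hd : DifferentiableOn ℂ (fun z : ℂ => ((a : ℂ) * z + z ^ 2 + (r : ℂ) ^ 2) * G z)
      (Metric.closedBall 0 r) := by
    refine DifferentiableOn.mul ?_ hG
    fun_prop
  have h1 := hd.circleIntegral_sub_inv_smul (w := 0) (Metric.mem_ball_self hr)
  have h2 : (∮ z in C(0, r), ((a : ℂ) + 2 * (z.re : ℂ)) * G z) =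
      ∮ z in C(0, r), (z - 0)⁻¹ • (((a : ℂ) * z + z ^ 2 + (r : ℂ) ^ 2) * G z) := by
    refine circleIntegral.integral_congr hr.le fun z hz => ?_
    have hz' : ‖z‖ = r := by simpa using hz
    have hz0 : z ≠ 0 := by
      rintro rfl
      simp at hz'
      linarith
    have h3 : z * (starRingEnd ℂ) z = (r : ℂ) ^ 2 := by
      rw [Complex.mul_conj, Complex.normSq_eq_norm_sq, hz']
      push_cast
      rfl
    have h4 : 2 * (z.re : ℂ) = z + (starRingEnd ℂ) z := by
      rw [Complex.add_conj]
      push_cast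
      rfl
    simp only [sub_zero, smul_eq_mul]
    rw [h4, ← h3]
    field_simp
    ring
  rw [h2, h1]
  simp

/-- Residue computation: for radii `r_k = √(μ_k ν_k)` with `θ·r₁·r₂ < 1`,
`(1/(2πi))² ∮∮ (a₁ + 2Re ζ₁)(a₂ + 2Re ζ₂)/(θ⁻¹ − ζ₁ζ₂)² dζ₁ dζ₂ = θ²·μ₁ν₁μ₂ν₂`. -/
theorem double_circle_integral_p_one
    (μ₁ ν₁ μ₂ ν₂ : ℝ) (hμ₁ : 0 < μ₁) (hν₁ : 0 < ν₁) (hμ₂ : 0 < μ₂) (hν₂ : 0 < ν₂)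
    (θ : ℝ) (hθ : 0 < θ)
    (a₁ a₂ r₁ r₂ : ℝ) (ha₁ : a₁ = μ₁ + ν₁) (ha₂ : a₂ = μ₂ + ν₂)
    (hr₁ : r₁ = Real.sqrt (μ₁ * ν₁)) (hr₂ : r₂ = Real.sqrt (μ₂ * ν₂))
    (h : θ * r₁ * r₂ < 1) :
    (1 / (2 * (π : ℂ) * Complex.I)) ^ 2 *
      (∮ z₁ in C(0, r₁), ∮ z₂ in C(0, r₂),
        ((a₁ : ℂ) + 2 * (z₁.re : ℂ)) * ((a₂ : ℂ) + 2 * (z₂.re : ℂ)) /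
          (((θ : ℂ))⁻¹ - z₁ * z₂) ^ 2) =
      ((θ : ℂ)) ^ 2 * μ₁ * ν₁ * μ₂ * ν₂ := by
  have p1 : 0 < r₁ := hr₁ ▸ Real.sqrt_pos.2 (mul_pos hμ₁ hν₁)
  have p2 : 0 < r₂ := hr₂ ▸ Real.sqrt_pos.2 (mul_pos hμ₂ hν₂)
  have s1 : (r₁ : ℂ) ^ 2 = μ₁ * ν₁ := by
    rw [hr₁]
    exact_mod_cast Real.sq_sqrt (mul_pos hμ₁ hν₁).le
  have s2 : (r₂ : ℂ) ^ 2 = μ₂ * ν₂ := by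
    rw [hr₂]
    exact_mod_cast Real.sq_sqrt (mul_pos hμ₂ hν₂).le
  have key : (∮ z₁ in C(0, r₁), ∮ z₂ in C(0, r₂),
        ((a₁ : ℂ) + 2 * (z₁.re : ℂ)) * ((a₂ : ℂ) + 2 * (z₂.re : ℂ)) /
          (((θ : ℂ))⁻¹ - z₁ * z₂) ^ 2) =
      ∮ z₁ in C(0, r₁), ((a₁ : ℂ) + 2 * (z₁.re : ℂ)) *
        (2 * π * I * ((r₂ : ℂ) ^ 2 * (θ : ℂ) ^ 2)) := by
    refine circleIntegral.integral_congr p1.le fun z hz => ?_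
    have hz' : ‖z‖ = r₁ := by simpa using hz
    have hG : DifferentiableOn ℂ
        (fun w : ℂ => ((a₁ : ℂ) + 2 * (z.re : ℂ)) * (((θ : ℂ)⁻¹ - z * w) ^ 2)⁻¹)
        (Metric.closedBall 0 r₂) := by
      refine DifferentiableOn.const_mul (DifferentiableOn.inv (by fun_prop) fun w hw => ?_) _
      refine pow_ne_zero _ fun h0 => ?_
      have hw' : ‖w‖ ≤ r₂ := by simpa using hw
      have h5 : (θ : ℂ)⁻¹ = z * w := sub_eq_zero.1 h0
      have h6 : θ⁻¹ = r₁ * ‖w‖ := by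
        have := congrArg norm h5
        rwa [norm_mul, hz', norm_inv, Complex.norm_real, Real.norm_of_nonneg hθ.le] at this
      have h7 : θ * (r₁ * ‖w‖) = 1 := by rw [← h6]; exact mul_inv_cancel₀ hθ.ne'
      have h8 : θ * (r₁ * ‖w‖) ≤ θ * (r₁ * r₂) := by gcongr
      linarith
    have := aux_circle a₂ r₂ p2 _ hG
    calc _ = _ := by
          refine circleIntegral.integral_congr p2.le fun w _ => ?_
          simp only [div_eq_mul_inv]
          ring
      _ = _ := this
      _ = _ := by simp; ring
  rw [key, aux_circle a₁ r₁ p1 (fun _ => _) (differentiableOn_const _), s1, s2]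
  have hpi : (π : ℂ) ≠ 0 := by exact_mod_cast Real.pi_ne_zero
  have hI : I ≠ 0 := Complex.I_ne_zero
  field_simp
end

section
/- Let μ₁, ν₁, μ₂, ν₂ > 0, set a_k = μ_k + ν_k, r_k = √(μ_k ν_k), and R = μ₁ν₁μ₂ν₂, and let θ > 0 satisfy θ·r₁·r₂ < 1. Then (1/(2πi))² · ∮∮_{counterclockwise circles of radii r₁, r₂} (a₁ + 2Re ζ₁)²·(a₂ + 2Re ζ₂)² / (θ^{-1} − ζ₁ζ₂)² dζ₁ dζ₂ = θ²·R·(4·a₁·a₂ + 2·θ·R). -/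
open Complex Real

lemma circ_aux (a r : ℝ) (hr : 0 < r) (h : ℂ → ℂ) (h' : ℂ) (U : Set ℂ) (hU : IsOpen U)
    (hsub : Metric.closedBall 0 r ⊆ U) (hd : DifferentiableOn ℂ h U) (h0 : HasDerivAt h h' 0) :
    (∮ z in C(0, r), ((a : ℂ) + 2 * (z.re : ℂ)) ^ 2 * h z) =
      2 * π * I * (2 * a * (r : ℂ) ^ 2 * h 0 + (r : ℂ) ^ 4 * h') := by
  have hg : DifferentiableOn ℂ (fun z => (z ^ 2 + a * z + (r : ℂ) ^ 2) ^ 2 * h z) U := by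
    fun_prop
  have hgd : HasDerivAt (fun z : ℂ => (z ^ 2 + a * z + (r : ℂ) ^ 2) ^ 2 * h z)
      (2 * a * (r : ℂ) ^ 2 * h 0 + (r : ℂ) ^ 4 * h') 0 := by
    have h1 : HasDerivAt (fun z : ℂ => z ^ 2 + a * z + (r : ℂ) ^ 2) a 0 := by
      have := ((hasDerivAt_pow 2 (0 : ℂ)).add ((hasDerivAt_id (0 : ℂ)).const_mul (a : ℂ))).add_const
        ((r : ℂ) ^ 2)
      refine this.congr_deriv ?_
      simp
    refine ((h1.pow 2).mul h0).congr_deriv ?_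
    simp
    ring
  have key := Complex.two_pi_I_inv_smul_circleIntegral_sub_sq_inv_smul_of_differentiable hU hsub hg
    (w₀ := 0) (by simpa using hr)
  rw [hgd.deriv, inv_smul_eq_iff₀ (by simp [Real.pi_ne_zero]), smul_eq_mul] at key
  rw [← key]
  apply circleIntegral.integral_congr hr.le
  intro z hz
  have hz' : ‖z‖ = r := by simpa using hz
  have hz0 : z ≠ 0 := by
    rintro rfl
    simp at hz'
    exact hr.ne hz'
  have e1 : z * (starRingEnd ℂ) z = (r : ℂ) ^ 2 := by
    rw [Complex.mul_conj, Complex.normSq_eq_norm_sq, hz']; push_cast; rfl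
  have e2 : 2 * (z.re : ℂ) = z + (starRingEnd ℂ) z := by
    rw [Complex.add_conj]; push_cast; rfl
  simp only [sub_zero, smul_eq_mul]
  rw [e2, ← e1]
  field_simp
  ring

/-- Residue computation: for radii `r_k = √(μ_k ν_k)`, `R = μ₁ν₁μ₂ν₂` and `θ·r₁·r₂ < 1`,
`(1/(2πi))² ∮∮ (a₁ + 2Re ζ₁)²(a₂ + 2Re ζ₂)²/(θ⁻¹ − ζ₁ζ₂)² dζ₁ dζ₂ = θ²R(4a₁a₂ + 2θR)`. -/
theorem double_circle_integral_p_two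
    (μ₁ ν₁ μ₂ ν₂ : ℝ) (hμ₁ : 0 < μ₁) (hν₁ : 0 < ν₁) (hμ₂ : 0 < μ₂) (hν₂ : 0 < ν₂)
    (θ : ℝ) (hθ : 0 < θ)
    (a₁ a₂ r₁ r₂ R : ℝ) (ha₁ : a₁ = μ₁ + ν₁) (ha₂ : a₂ = μ₂ + ν₂)
    (hr₁ : r₁ = Real.sqrt (μ₁ * ν₁)) (hr₂ : r₂ = Real.sqrt (μ₂ * ν₂))
    (hR : R = μ₁ * ν₁ * μ₂ * ν₂)
    (h : θ * r₁ * r₂ < 1) :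
    (1 / (2 * (π : ℂ) * Complex.I)) ^ 2 *
      (∮ z₁ in C(0, r₁), ∮ z₂ in C(0, r₂),
        ((a₁ : ℂ) + 2 * (z₁.re : ℂ)) ^ 2 * ((a₂ : ℂ) + 2 * (z₂.re : ℂ)) ^ 2 /
          (((θ : ℂ))⁻¹ - z₁ * z₂) ^ 2) =
      ((θ : ℂ)) ^ 2 * R * (4 * a₁ * a₂ + 2 * θ * R) := by
  have p1 : 0 < r₁ := by rw [hr₁]; positivity
  have p2 : 0 < r₂ := by rw [hr₂]; positivity
  have hRr : R = r₁ ^ 2 * r₂ ^ 2 := by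
    rw [hr₁, hr₂, Real.sq_sqrt (by positivity), Real.sq_sqrt (by positivity), hR]; ring
  have hθc : (θ : ℂ) ≠ 0 := by exact_mod_cast hθ.ne'
  have inner : ∀ z₁ ∈ Metric.sphere (0 : ℂ) r₁,
      (∮ z₂ in C(0, r₂), ((a₁ : ℂ) + 2 * (z₁.re : ℂ)) ^ 2 * ((a₂ : ℂ) + 2 * (z₂.re : ℂ)) ^ 2 /
          (((θ : ℂ))⁻¹ - z₁ * z₂) ^ 2) =
      ((a₁ : ℂ) + 2 * (z₁.re : ℂ)) ^ 2 * (2 * π * I *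
        (2 * a₂ * (r₂ : ℂ) ^ 2 * (θ : ℂ) ^ 2 + (r₂ : ℂ) ^ 4 * (2 * (θ : ℂ) ^ 3 * z₁))) := by
    intro z₁ hz
    have hz' : ‖z₁‖ = r₁ := by simpa using hz
    have hc : HasDerivAt (fun z : ℂ => ((((θ : ℂ))⁻¹ - z₁ * z) ^ 2)⁻¹) (2 * (θ : ℂ) ^ 3 * z₁) 0 := by
      have h1 : HasDerivAt (fun z : ℂ => ((θ : ℂ))⁻¹ - z₁ * z) (-z₁) 0 := by
        refine (((hasDerivAt_id (0 : ℂ)).const_mul z₁).const_sub ((θ : ℂ))⁻¹).congr_deriv ?_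
        simp
      refine ((h1.pow 2).inv (by simpa using hθc)).congr_deriv ?_
      simp
      field_simp
    have := circ_aux a₂ r₂ p2 (fun z : ℂ => ((((θ : ℂ))⁻¹ - z₁ * z) ^ 2)⁻¹) _
      {z | (θ : ℂ)⁻¹ - z₁ * z ≠ 0} (isOpen_ne_fun (by fun_prop) (by fun_prop))
      (by
        intro z hzb h0
        have hzn : ‖z‖ ≤ r₂ := by simpa using hzb
        have h2 : (θ : ℂ)⁻¹ = z₁ * z := sub_eq_zero.mp h0
        have h3 : θ⁻¹ = r₁ * ‖z‖ := by
          have := congrArg norm h2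
          rwa [norm_mul, hz', norm_inv, Complex.norm_real, Real.norm_of_nonneg hθ.le] at this
        have h4 : θ * (r₁ * ‖z‖) = 1 := by rw [← h3]; exact mul_inv_cancel₀ hθ.ne'
        have h5 : θ * (r₁ * ‖z‖) ≤ θ * (r₁ * r₂) := by gcongr
        linarith)
      (by
        apply DifferentiableOn.inv (by fun_prop)
        intro z hz
        exact pow_ne_zero 2 hz) hc
    rw [show (θ : ℂ) ^ 2 = (((θ : ℂ)⁻¹ - z₁ * 0) ^ 2)⁻¹ by simp, ← this,
      ← circleIntegral.integral_const_mul]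
    simp only [div_eq_mul_inv, mul_assoc]
  rw [circleIntegral.integral_congr p1.le inner]
  rw [circ_aux a₁ r₁ p1 _ (2 * π * I * ((r₂ : ℂ) ^ 4 * (2 * (θ : ℂ) ^ 3))) Set.univ isOpen_univ
    (Set.subset_univ _) (by fun_prop) (by
      refine (((((hasDerivAt_id (0 : ℂ)).const_mul (2 * (θ : ℂ) ^ 3)).const_mul
        ((r₂ : ℂ) ^ 4)).const_add (2 * a₂ * (r₂ : ℂ) ^ 2 * (θ : ℂ) ^ 2)).const_mul (2 * π * I)).congr_deriv ?_
      simp)]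
  have hpi : (π : ℂ) ≠ 0 := by exact_mod_cast Real.pi_ne_zero
  have hI := Complex.I_ne_zero
  rw [hRr]
  push_cast
  field_simp
  ring
end
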